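/- arXiv:2205.01022 — 3 statements merged into one kernel-verified Lean document; each statement's English description precedes it below -/
import Mathlib

section
/- Let p = (p_k)_{k≥1} be any probability distribution on a countable alphabet and let m ≥ 2 be an integer. Let p_m = (p_{m,k})_{k≥1} be the m-th order CDOTC of p. Then Σ_{k≥1} p_{m,k} |ln p_{m,k}|² < ∞. -/
open Filter Real Topology

noncomputable section

/-- The `m`-th order conditional distribution of total collision (CDOTC)
of a distribution `p` on a countable alphabet. -/
def cdotc (p : ℕ → ℝ) (m : ℕ) (k : ℕ) : ℝ := p k ^ m / ∑' i, p i ^ m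

/-!
The `m`-th roots of the weights `p_{m,k}` are proportional to `p_k`, so `∑ p_{m,k} ^ (1 / m)`
converges. Since `1 / m < 1` and `x |ln x| ^ r = o(x ^ s)` as `x → 0⁺` for every `s < 1`,
the series converges by comparison.
-/

theorem isLittleO_mul_abs_log_rpow_nhdsGE_zero {s : ℝ} (hs : s < 1) (r : ℝ) :
    (fun x : ℝ => x * |log x| ^ r) =o[𝓝[≥] 0] fun x => x ^ s := by
  have h_pos : (fun x : ℝ => x * |log x| ^ r) =o[𝓝[>] 0] fun x => x ^ s := by
    have h_log : (fun x : ℝ => |log x| ^ r) =o[𝓝[>] 0] fun x => x ^ (s - 1) :=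
      isLittleO_abs_log_rpow_rpow_nhdsGT_zero r (sub_neg.2 hs)
    refine ((Asymptotics.isBigO_refl (fun x : ℝ => x) _).mul_isLittleO h_log).congr' .rfl ?_
    filter_upwards [self_mem_nhdsWithin] with x hx
    rw [rpow_sub_one (ne_of_gt hx), mul_div_cancel₀ _ (ne_of_gt hx)]
  rw [← Set.Ioi_insert, nhdsWithin_insert, Asymptotics.isLittleO_sup]
  exact ⟨Asymptotics.isLittleO_pure.2 (zero_mul _), h_pos⟩

section

variable {ι : Type*} {q : ι → ℝ} {s : ℝ}

theorem tendsto_cofinite_nhdsGE_zero_of_summable_rpow (hq : ∀ k, 0 ≤ q k) (hs : 0 < s)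
    (hsum : Summable fun k => q k ^ s) : Tendsto q cofinite (𝓝[≥] 0) := by
  refine tendsto_nhdsWithin_iff.2 ⟨?_, .of_forall hq⟩
  have h_root : Tendsto (fun k => (q k ^ s) ^ s⁻¹) cofinite (𝓝 (0 ^ s⁻¹)) :=
    hsum.tendsto_cofinite_zero.rpow_const (.inr (inv_nonneg.2 hs.le))
  simpa only [rpow_rpow_inv (hq _) hs.ne', zero_rpow (inv_ne_zero hs.ne')] using h_root

theorem summable_mul_abs_log_rpow_of_summable_rpow (hq : ∀ k, 0 ≤ q k) (hs₀ : 0 < s) (hs₁ : s < 1)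
    (hsum : Summable fun k => q k ^ s) (r : ℝ) : Summable fun k => q k * |log (q k)| ^ r :=
  summable_of_isBigO hsum <| (isLittleO_mul_abs_log_rpow_nhdsGE_zero hs₁ r).isBigO.comp_tendsto <|
    tendsto_cofinite_nhdsGE_zero_of_summable_rpow hq hs₀ hsum

end

section

variable {p : ℕ → ℝ}

theorem cdotc_nonneg (hp : ∀ k, 0 ≤ p k) (m k : ℕ) : 0 ≤ cdotc p m k :=
  div_nonneg (pow_nonneg (hp k) m) (tsum_nonneg fun i => pow_nonneg (hp i) m)

theorem cdotc_rpow_inv (hp : ∀ k, 0 ≤ p k) {m : ℕ} (hm : m ≠ 0) (k : ℕ) :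
    cdotc p m k ^ (m : ℝ)⁻¹ = p k / (∑' i, p i ^ m) ^ (m : ℝ)⁻¹ := by
  rw [cdotc, div_rpow (pow_nonneg (hp k) m) (tsum_nonneg fun i => pow_nonneg (hp i) m),
    pow_rpow_inv_natCast (hp k) hm]

/-- Since `∑'` is `0` on divergent series, `hsum` says that `∑ p_k` converges and `p ≠ 0`. -/
theorem cdotc_summable_log_sq_general (hp : ∀ k, 0 ≤ p k) (hsum : ∑' k, p k ≠ 0)
    {m : ℕ} (hm : 2 ≤ m) (r : ℝ) :
    Summable fun k => cdotc p m k * |log (cdotc p m k)| ^ r := by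
  have hp_summable : Summable p := by
    by_contra h
    exact hsum (tsum_eq_zero_of_not_summable h)
  have hm_one : (1 : ℝ) < m := by exact_mod_cast hm
  refine summable_mul_abs_log_rpow_of_summable_rpow (cdotc_nonneg hp m)
    (inv_pos.2 (one_pos.trans hm_one)) (inv_lt_one_of_one_lt₀ hm_one) ?_ r
  simpa only [cdotc_rpow_inv hp (by lia : m ≠ 0)] using hp_summable.div_const _

end

/-- **Lemma 2, first part**: for any probability distribution `p` and any order `m ≥ 2`,
the CDOTC satisfies `Σ_k p_{m,k} |ln p_{m,k}|² < ∞`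
(note `Real.log 0 = 0`, so terms with `p_{m,k} = 0` vanish). -/
theorem cdotc_summable_log_sq
    (p : ℕ → ℝ) (hp0 : ∀ k, 0 ≤ p k) (hp1 : ∑' k, p k = 1)
    (m : ℕ) (hm : 2 ≤ m) :
    Summable (fun k => cdotc p m k * |Real.log (cdotc p m k)| ^ 2) := by
  simpa only [rpow_two] using cdotc_summable_log_sq_general hp0 (hp1.trans_ne one_ne_zero) hm 2
end
end

section
/- Let p = (p_k)_{k≥1} be any probability distribution on a countable alphabet and let m ≥ 2 be an integer. Then the m-th order generalized Shannon entropy H_m = −Σ_{k≥1} p_{m,k} ln p_{m,k} is finite, i.e., Σ_{k≥1} p_{m,k} |ln p_{m,k}| < ∞. -/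
/-!
A nonnegative family `q` with `∑ q k ^ t < ∞` for some `0 < t < 1` has finite entropy, because
`x log x = o(x ^ t)` as `x → 0`. For the CDOTC take `t = 1 / m`: the family `p_{m,k} ^ (1 / m)` is
proportional to `p_k`, hence summable.
-/

open Filter Real Topology

noncomputable section

/-- The escort distribution of order `r`: the CDOTC of a family `p` on an arbitrary alphabet `ι`,
with the integer order `m` replaced by a real one. -/
def escort {ι : Type*} (p : ι → ℝ) (r : ℝ) (k : ι) : ℝ := p k ^ r / ∑' i, p i ^ r

lemma cdotc_eq_escort (p : ℕ → ℝ) (m : ℕ) : cdotc p m = escort p m := by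
  ext k
  simp only [cdotc, escort, rpow_natCast]

lemma isLittleO_negMulLog_rpow_nhdsGE_zero {t : ℝ} (ht : t < 1) :
    negMulLog =o[𝓝[≥] 0] fun x ↦ x ^ t := by
  have hlog : log =o[𝓝[>] 0] fun x ↦ x ^ (t - 1) :=
    isLittleO_log_rpow_nhdsGT_zero (sub_neg.2 ht)
  have hrpow : (fun x : ℝ ↦ x * x ^ (t - 1)) =ᶠ[𝓝[>] 0] fun x ↦ x ^ t := by
    filter_upwards [self_mem_nhdsWithin] with x (hx : 0 < x)
    rw [rpow_sub_one hx.ne', mul_div_cancel₀ _ hx.ne']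
  have hGT : negMulLog =o[𝓝[>] 0] fun x ↦ x ^ t := by
    rw [negMulLog_eq_neg]
    exact (((Asymptotics.isBigO_refl id _).mul_isLittleO hlog).trans_eventuallyEq hrpow).neg_left
  rw [← Set.Ioi_insert]
  exact hGT.insert negMulLog_zero

section

variable {ι : Type*} {p : ι → ℝ} {r t : ℝ}

lemma summable_negMulLog_of_summable_rpow (hp : ∀ k, 0 ≤ p k) (ht₀ : 0 < t) (ht₁ : t < 1)
    (h : Summable fun k ↦ p k ^ t) : Summable fun k ↦ negMulLog (p k) := by
  have hp_tendsto : Tendsto p cofinite (𝓝 0) := by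
    have := h.tendsto_cofinite_zero.rpow_const (p := t⁻¹) (.inr (inv_nonneg.2 ht₀.le))
    simpa only [rpow_rpow_inv (hp _) ht₀.ne', zero_rpow (inv_ne_zero ht₀.ne')] using this
  have hp_nhdsGE : Tendsto p cofinite (𝓝[≥] 0) :=
    tendsto_nhdsWithin_iff.2 ⟨hp_tendsto, .of_forall hp⟩
  exact summable_of_isBigO h
    ((isLittleO_negMulLog_rpow_nhdsGE_zero ht₁).comp_tendsto hp_nhdsGE).isBigO

lemma escort_nonneg (hp : ∀ k, 0 ≤ p k) (k : ι) : 0 ≤ escort p r k :=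
  div_nonneg (rpow_nonneg (hp k) r) (tsum_nonneg fun i ↦ rpow_nonneg (hp i) r)

lemma escort_rpow_inv (hp : ∀ k, 0 ≤ p k) (hr : r ≠ 0) (k : ι) :
    escort p r k ^ r⁻¹ = p k / (∑' i, p i ^ r) ^ r⁻¹ := by
  rw [escort, div_rpow (rpow_nonneg (hp k) r) (tsum_nonneg fun i ↦ rpow_nonneg (hp i) r),
    rpow_rpow_inv (hp k) hr]

theorem gse_finite_general (hp₀ : ∀ k, 0 ≤ p k) (hp : Summable p) (hr : 1 < r) :
    Summable fun k ↦ escort p r k * |log (escort p r k)| := by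
  have hr₀ : 0 < r := one_pos.trans hr
  have h_rpow : Summable fun k ↦ escort p r k ^ r⁻¹ := by
    simpa only [escort_rpow_inv hp₀ hr₀.ne'] using hp.div_const _
  have h_entropy : Summable fun k ↦ negMulLog (escort p r k) :=
    summable_negMulLog_of_summable_rpow (escort_nonneg hp₀) (inv_pos.2 hr₀)
      (inv_lt_one_of_one_lt₀ hr) h_rpow
  simpa only [negMulLog, abs_mul, abs_neg, abs_of_nonneg (escort_nonneg hp₀ _)]
    using h_entropy.abs

end

/-- For any probability distribution `p` on a countable alphabet and any order `m ≥ 2`,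
the generalized Shannon entropy `H_m = −Σ_k p_{m,k} ln p_{m,k}` is finite, i.e.
`Σ_k p_{m,k} |ln p_{m,k}| < ∞` (note `Real.log 0 = 0`, giving `0 ln 0 = 0`). -/
theorem gse_finite
    (p : ℕ → ℝ) (hp0 : ∀ k, 0 ≤ p k) (hp1 : ∑' k, p k = 1)
    (m : ℕ) (hm : 2 ≤ m) :
    Summable (fun k => cdotc p m k * |Real.log (cdotc p m k)|) := by
  have hp : Summable p := by
    by_contra h
    exact zero_ne_one ((tsum_eq_zero_of_not_summable h).symm.trans hp1)
  rw [cdotc_eq_escort]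
  exact gse_finite_general hp0 hp (Nat.one_lt_cast.2 hm)
end
end

section
/- Fix an integer K ≥ 2 and an integer m ≥ 2. Regard H_m as a function of the free variables (p_1, …, p_{K−1}), with p_K = 1 − Σ_{j=1}^{K−1} p_j, where H_m(p_1, …, p_{K−1}) = −Σ_{k=1}^K p_{m,k} ln p_{m,k} and p_{m,k} = p_k^m / Σ_{i=1}^K p_i^m. Then at any interior point (all p_k > 0), for each i = 1, …, K−1, the partial derivative satisfies ∂H_m/∂p_i = (ln p_{m,K} − ln p_{m,i}) · m p_{m,i}/p_i − m ( p_{m,i}/p_i − p_{m,K}/p_K ) ( H_m + ln p_{m,K} ). -/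
open Filter Real Topology

noncomputable section

/-- The `m`-th order CDOTC of a distribution `p` on a finite alphabet of `K` categories. -/
def cdotcF {K : ℕ} (p : Fin K → ℝ) (m : ℕ) (k : Fin K) : ℝ := p k ^ m / ∑ i, p i ^ m

/-- The `m`-th order generalized Shannon entropy (GSE) of `p` on a finite alphabet. -/
def gseF {K : ℕ} (p : Fin K → ℝ) (m : ℕ) : ℝ :=
  -∑ k, cdotcF p m k * Real.log (cdotcF p m k)

/-- Completing the free variables `(p_1, …, p_{K-1})` to a full probability vector
on `K = J + 1` categories by setting `p_K := 1 − Σ_{j<K} p_j`. -/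
def completeProb {J : ℕ} (v : Fin J → ℝ) : Fin (J + 1) → ℝ :=
  Fin.snoc v (1 - ∑ j, v j)

/-!
`H_m` is the Shannon entropy of the normalized weights `q_k = w_k / S`, where `w_k = p_k ^ m` and
`S = ∑ w_k`. Since `∑ q_k` is constant, differentiating the logarithms contributes nothing, and the
derivative along any variation is `-∑ (w_k' / S) (log q_k + H_m)`. Varying `p_i` alone changes `p_K`
by the opposite amount, so only the summands `k = i` and `k = K` survive. As `0 log 0 = 0`, a weight
that stays zero also contributes nothing.
-/

section WeightEntropy

variable {ι : Type*} [Fintype ι]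

/-- The Shannon entropy of the distribution obtained by normalizing a vector of weights. Written
with `negMulLog`, it follows the convention `0 log 0 = 0`, so zero weights are allowed. -/
def weightEntropy (w : ι → ℝ) : ℝ := ∑ k, negMulLog (w k / ∑ j, w j)

theorem hasDerivAt_negMulLog_comp {f : ℝ → ℝ} {f' x : ℝ} (hf : HasDerivAt f f' x)
    (hzero : f x = 0 → f =ᶠ[𝓝 x] 0) :
    HasDerivAt (fun t => negMulLog (f t)) ((-log (f x) - 1) * f') x := by
  by_cases hfx : f x = 0
  · have hf' : f' = 0 :=
      hf.unique ((hasDerivAt_const x 0).congr_of_eventuallyEq (hzero hfx))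
    have hcomp : (fun t => negMulLog (f t)) =ᶠ[𝓝 x] fun _ => 0 := by
      filter_upwards [hzero hfx] with t ht
      simp [ht]
    rw [hf', mul_zero]
    exact (hasDerivAt_const x 0).congr_of_eventuallyEq hcomp
  · exact (hasDerivAt_negMulLog hfx).comp x hf

theorem hasDerivAt_div_sum {𝕜 : Type*} [NontriviallyNormedField 𝕜] {w : 𝕜 → ι → 𝕜}
    {w' : ι → 𝕜} {x : 𝕜} (hw : ∀ k, HasDerivAt (fun t => w t k) (w' k) x)
    (hsum : ∑ j, w x j ≠ 0) (k : ι) :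
    HasDerivAt (fun t => w t k / ∑ j, w t j)
      ((w' k - w x k / (∑ j, w x j) * ∑ j, w' j) / ∑ j, w x j) x := by
  have hS : HasDerivAt (fun t => ∑ j, w t j) (∑ j, w' j) x := .fun_sum fun j _ => hw j
  refine ((hw k).fun_div hS hsum).congr_deriv ?_
  field_simp

theorem hasDerivAt_weightEntropy {w : ℝ → ι → ℝ} {w' : ι → ℝ} {x : ℝ}
    (hw : ∀ k, HasDerivAt (fun t => w t k) (w' k) x)
    (hzero : ∀ k, w x k = 0 → (fun t => w t k) =ᶠ[𝓝 x] 0) (hsum : ∑ j, w x j ≠ 0) :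
    HasDerivAt (fun t => weightEntropy (w t))
      (-∑ k, w' k / (∑ j, w x j) * (log (w x k / ∑ j, w x j) + weightEntropy (w x))) x := by
  have hnegMulLog (k : ι) := hasDerivAt_negMulLog_comp (hasDerivAt_div_sum hw hsum k) fun hk => by
    filter_upwards [hzero k ((div_eq_zero_iff.mp hk).resolve_right hsum)] with t ht
    simp [ht]
  refine (HasDerivAt.fun_sum fun k _ => hnegMulLog k).congr_deriv ?_
  set S := ∑ j, w x j
  set S' := ∑ j, w' j with hS'
  have hone : ∑ k, w x k / S = 1 := by rw [← Finset.sum_div, div_self hsum]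
  calc
    ∑ k, (-log (w x k / S) - 1) * ((w' k - w x k / S * S') / S)
      = ∑ k, (-(w' k / S * log (w x k / S)) - negMulLog (w x k / S) * (S' / S)
          - w' k / S + w x k / S * (S' / S)) :=
        Finset.sum_congr rfl fun k _ => by rw [negMulLog]; ring
    _ = -∑ k, w' k / S * log (w x k / S) - weightEntropy (w x) * (S' / S) := by
        rw [Finset.sum_add_distrib, Finset.sum_sub_distrib, Finset.sum_sub_distrib,
          Finset.sum_neg_distrib, ← Finset.sum_mul, ← Finset.sum_mul, ← Finset.sum_div, hone,
          ← hS', one_mul, sub_add_cancel, weightEntropy]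
    _ = -∑ k, w' k / S * (log (w x k / S) + weightEntropy (w x)) := by
        simp only [mul_add, Finset.sum_add_distrib]
        rw [← Finset.sum_mul, ← Finset.sum_div, ← hS']
        ring

end WeightEntropy

theorem gseF_eq_weightEntropy {K : ℕ} (p : Fin K → ℝ) (m : ℕ) :
    gseF p m = weightEntropy fun k => p k ^ m := by
  simp [gseF, weightEntropy, cdotcF, negMulLog]

theorem hasLineDerivAt_gseF {K m : ℕ} {p d : Fin K → ℝ} (hsum : ∑ k, p k ^ m ≠ 0)
    (hd : ∀ k, p k = 0 → d k = 0) :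
    HasLineDerivAt ℝ (fun q => gseF q m)
      (-∑ k, d k * (m * cdotcF p m k / p k * (log (cdotcF p m k) + gseF p m))) p d := by
  have hw (k : Fin K) : HasDerivAt (fun t : ℝ => (p k + t * d k) ^ m)
      (m * p k ^ m / p k * d k) 0 := by
    have hline : HasDerivAt (fun t : ℝ => p k + t * d k) (d k) 0 := by
      simpa using ((hasDerivAt_id' (0 : ℝ)).mul_const (d k)).const_add (p k)
    refine (hline.fun_pow m).congr_deriv ?_
    by_cases hk : p k = 0
    · simp [hd k hk]
    · rcases m with _ | m
      · simp
      · simp [pow_succ, hk, ← mul_assoc]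
  have hzero (k : Fin K) (hk : (p k + 0 * d k) ^ m = 0) :
      (fun t : ℝ => (p k + t * d k) ^ m) =ᶠ[𝓝 0] 0 := by
    have hpk : p k = 0 := by simpa using eq_zero_of_pow_eq_zero hk
    refine .of_eq (funext fun t => ?_)
    simpa [hpk, hd k hpk] using hk
  have hentropy := hasDerivAt_weightEntropy hw hzero (by simpa using hsum)
  simp only [zero_mul, add_zero, ← gseF_eq_weightEntropy] at hentropy
  refine HasDerivAt.congr_deriv hentropy ?_
  refine congrArg Neg.neg (Finset.sum_congr rfl fun k _ => ?_)
  simp only [cdotcF]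
  ring

theorem completeProb_update {J : ℕ} (v : Fin J → ℝ) (i : Fin J) (t : ℝ) :
    completeProb (Function.update v i t) =
      completeProb v + (t - v i) • (Pi.single i.castSucc 1 - Pi.single (Fin.last J) 1) := by
  have hupdate : Function.update v i t = v + Pi.single i (t - v i) := by
    ext j
    rcases eq_or_ne j i with rfl | hj <;> simp [*]
  ext k
  refine Fin.lastCases ?_ (fun j => ?_) k
  · simp only [completeProb, hupdate, Fin.snoc_last, Pi.add_apply, Pi.sub_apply, Pi.smul_apply,
      Finset.sum_add_distrib, Finset.sum_pi_single', Finset.mem_univ, if_true, smul_eq_mul,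
      Pi.single_eq_same, Pi.single_eq_of_ne (Fin.castSucc_lt_last i).ne']
    ring
  · simp [completeProb, hupdate, (Fin.castSucc_lt_last j).ne, Pi.single_apply]

theorem gse_partial_derivative_general
    (J m : ℕ) (v : Fin J → ℝ) (hnonneg : ∀ k, 0 ≤ completeProb v k) (i : Fin J)
    (hi : 0 < completeProb v i.castSucc) (hlast : 0 < completeProb v (Fin.last J)) :
    HasDerivAt (fun t => gseF (completeProb (Function.update v i t)) m)
      ((log (cdotcF (completeProb v) m (Fin.last J)) - log (cdotcF (completeProb v) m i.castSucc))
        * (m * cdotcF (completeProb v) m i.castSucc / completeProb v i.castSucc)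
      - m * (cdotcF (completeProb v) m i.castSucc / completeProb v i.castSucc
          - cdotcF (completeProb v) m (Fin.last J) / completeProb v (Fin.last J))
        * (gseF (completeProb v) m + log (cdotcF (completeProb v) m (Fin.last J))))
      (v i) := by
  set p := completeProb v with hp
  set d : Fin (J + 1) → ℝ := Pi.single i.castSucc 1 - Pi.single (Fin.last J) 1 with hd
  have hsum : ∑ k, p k ^ m ≠ 0 :=
    (Finset.sum_pos' (fun k _ => pow_nonneg (hnonneg k) m)
      ⟨Fin.last J, Finset.mem_univ _, pow_pos hlast m⟩).ne'
  have hsupport (k : Fin (J + 1)) (hk : p k = 0) : d k = 0 := by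
    have hki : k ≠ i.castSucc := by rintro rfl; exact hi.ne' hk
    have hkl : k ≠ Fin.last J := by rintro rfl; exact hlast.ne' hk
    simp [hd, hki, hkl]
  have hline := hasLineDerivAt_gseF hsum hsupport
  rw [HasLineDerivAt, ← sub_self (v i)] at hline
  simp only [completeProb_update, ← hp, ← hd]
  refine (hline.comp_sub_const (v i) (v i)).congr_deriv ?_
  simp only [hd, Pi.sub_apply, Pi.single_apply, sub_mul, ite_mul, one_mul, zero_mul,
    Finset.sum_sub_distrib, Finset.sum_ite_eq', Finset.mem_univ, if_true]
  ring

/-- **The partial-derivative computation in the proof of Lemma 3**: regarding `H_m` as a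
function of the free variables `(p_1, …, p_{K−1})` (with `K = J + 1 ≥ 2` and
`p_K = 1 − Σ_{j<K} p_j`), at any interior point and for each `i ≤ K − 1`,
`∂H_m/∂p_i = (ln p_{m,K} − ln p_{m,i}) · m p_{m,i}/p_i
  − m (p_{m,i}/p_i − p_{m,K}/p_K)(H_m + ln p_{m,K})`. -/
theorem gse_partial_derivative
    (J : ℕ) (hJ : 1 ≤ J) (m : ℕ) (hm : 2 ≤ m)
    (v : Fin J → ℝ) (hpos : ∀ k, 0 < completeProb v k) (i : Fin J) :
    HasDerivAt (fun t => gseF (completeProb (Function.update v i t)) m)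
      ((Real.log (cdotcF (completeProb v) m (Fin.last J))
          - Real.log (cdotcF (completeProb v) m i.castSucc))
        * (m * cdotcF (completeProb v) m i.castSucc / completeProb v i.castSucc)
      - m * (cdotcF (completeProb v) m i.castSucc / completeProb v i.castSucc
          - cdotcF (completeProb v) m (Fin.last J) / completeProb v (Fin.last J))
        * (gseF (completeProb v) m + Real.log (cdotcF (completeProb v) m (Fin.last J))))
      (v i) :=
  gse_partial_derivative_general J m v (fun k => (hpos k).le) i (hpos _) (hpos _)
end
end
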